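/- Let p be a prime, n ≥ 2, and consider the short exact sequence 1 → (ℤ/pℤ)³ →f 𝓗(pⁿ) →q 𝓗(pⁿ⁻¹) → 1, where q is componentwise reduction modulo pⁿ⁻¹. For every subgroup H of 𝓗(pⁿ⁻¹), the pseudo Chermak-Delgado measure satisfies m_s(q⁻¹(H)) = p⁶ · m(H), where m(H) = |H| · |C(H)| is the Chermak-Delgado measure of H in 𝓗(pⁿ⁻¹). -/

import Mathlib

theorem pc_mem_ker_iff {G K : Type*} [Group G] [Group K] (q : G →* K) (s g : G) :
    s⁻¹ * g⁻¹ * s * g ∈ q.ker ↔ Commute (q s) (q g) := by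
  rw [MonoidHom.mem_ker]
  simp only [map_mul, map_inv]
  rw [mul_assoc, ← mul_inv_rev, inv_mul_eq_one, commute_iff_eq]
  exact eq_comm

/-- The `q`-pseudocentralizer of a subset `S` of `G`:
all `g` such that `[s, g] = s⁻¹ * g⁻¹ * s * g ∈ ker q` for all `s ∈ S`. -/
def pseudocentralizer {G K : Type*} [Group G] [Group K] (q : G →* K) (S : Set G) :
    Subgroup G where
  carrier := {g : G | ∀ s ∈ S, s⁻¹ * g⁻¹ * s * g ∈ q.ker}
  one_mem' := fun s _ => by
    rw [pc_mem_ker_iff, map_one]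
    exact Commute.one_right _
  mul_mem' := fun {a b} ha hb s hs => by
    rw [pc_mem_ker_iff, map_mul]
    exact ((pc_mem_ker_iff q s a).mp (ha s hs)).mul_right ((pc_mem_ker_iff q s b).mp (hb s hs))
  inv_mem' := fun {a} ha s hs => by
    rw [pc_mem_ker_iff, map_inv]
    exact ((pc_mem_ker_iff q s a).mp (ha s hs)).inv_right

theorem mem_pseudocentralizer_iff {G K : Type*} [Group G] [Group K] {q : G →* K} {S : Set G}
    {g : G} : g ∈ pseudocentralizer q S ↔ ∀ s ∈ S, s⁻¹ * g⁻¹ * s * g ∈ q.ker := Iff.rfl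

/-- The mod `r` Heisenberg group, as triples `(x, y, z)` over `ZMod r`. -/
@[ext]
structure Heis (r : ℕ) where
  x : ZMod r
  y : ZMod r
  z : ZMod r

namespace Heis

variable {r : ℕ}

private def hmul (a b : Heis r) : Heis r := ⟨a.x + b.x, a.y + b.y + a.x * b.z, a.z + b.z⟩
private def hone : Heis r := ⟨0, 0, 0⟩
private def hinv (a : Heis r) : Heis r := ⟨-a.x, a.x * a.z - a.y, -a.z⟩

instance : Group (Heis r) where
  mul := hmul
  one := hone
  inv := hinv
  mul_assoc a b c := by
    show hmul (hmul a b) c = hmul a (hmul b c)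
    ext <;> (dsimp [hmul]; ring)
  one_mul a := by
    show hmul hone a = a
    ext <;> (dsimp [hmul, hone]; ring)
  mul_one a := by
    show hmul a hone = a
    ext <;> (dsimp [hmul, hone]; ring)
  inv_mul_cancel a := by
    show hmul (hinv a) a = hone
    ext <;> (dsimp [hmul, hinv, hone]; ring)

@[simp] theorem mul_x (a b : Heis r) : (a * b).x = a.x + b.x := rfl
@[simp] theorem mul_y (a b : Heis r) : (a * b).y = a.y + b.y + a.x * b.z := rfl
@[simp] theorem mul_z (a b : Heis r) : (a * b).z = a.z + b.z := rfl
@[simp] theorem one_x : (1 : Heis r).x = 0 := rfl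
@[simp] theorem one_y : (1 : Heis r).y = 0 := rfl
@[simp] theorem one_z : (1 : Heis r).z = 0 := rfl
@[simp] theorem inv_x (a : Heis r) : (a⁻¹).x = -a.x := rfl
@[simp] theorem inv_y (a : Heis r) : (a⁻¹).y = a.x * a.z - a.y := rfl
@[simp] theorem inv_z (a : Heis r) : (a⁻¹).z = -a.z := rfl

/-- Componentwise reduction `Heis r → Heis s` when `s ∣ r`. -/
def heisMap {r s : ℕ} (h : s ∣ r) : Heis r →* Heis s where
  toFun a := ⟨ZMod.castHom h (ZMod s) a.x, ZMod.castHom h (ZMod s) a.y, ZMod.castHom h (ZMod s) a.z⟩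
  map_one' := by
    ext <;> simp only [one_x, one_y, one_z, map_zero]
  map_mul' a b := by
    ext <;> simp only [mul_x, mul_y, mul_z, map_add, map_mul]

end Heis

/-- Componentwise reduction modulo `p ^ (n - 1)` from `Heis (p ^ n)` to `Heis (p ^ (n - 1))`. -/
def heisQ (p n : ℕ) : Heis (p ^ n) →* Heis (p ^ (n - 1)) :=
  Heis.heisMap (pow_dvd_pow p (Nat.sub_le n 1))

namespace Heis

/-- The Heisenberg group mod `r` as a type of triples. -/
def equivProd (r : ℕ) : Heis r ≃ ZMod r × ZMod r × ZMod r where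
  toFun a := (a.x, a.y, a.z)
  invFun t := ⟨t.1, t.2.1, t.2.2⟩
  left_inv _ := rfl
  right_inv _ := rfl

theorem natCard (r : ℕ) : Nat.card (Heis r) = r ^ 3 := by
  rw [Nat.card_congr (equivProd r), Nat.card_prod, Nat.card_prod, Nat.card_zmod]
  ring

theorem heisMap_surjective {r s : ℕ} (h : s ∣ r) : Function.Surjective (heisMap h) := by
  intro b
  obtain ⟨x, hx⟩ := ZMod.castHom_surjective h b.x
  obtain ⟨y, hy⟩ := ZMod.castHom_surjective h b.y
  obtain ⟨z, hz⟩ := ZMod.castHom_surjective h b.z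
  exact ⟨⟨x, y, z⟩, Heis.ext hx hy hz⟩

end Heis

/-- The pseudocentralizer of a full preimage under a surjection is the preimage of the
centralizer. -/
theorem pseudocentralizer_comap {G K : Type*} [Group G] [Group K] {q : G →* K}
    (hq : Function.Surjective q) (H : Subgroup K) :
    pseudocentralizer q (H.comap q : Set G) = (Subgroup.centralizer (H : Set K)).comap q := by
  ext g
  simp only [mem_pseudocentralizer_iff, pc_mem_ker_iff, Subgroup.mem_comap,
    Subgroup.mem_centralizer_iff, SetLike.mem_coe, hq.forall, commute_iff_eq]

theorem heisQ_surjective (p n : ℕ) : Function.Surjective (heisQ p n) :=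
  Heis.heisMap_surjective _

theorem card_comap_heisQ {p n : ℕ} (hp : p.Prime) (hn : 1 ≤ n)
    (H : Subgroup (Heis (p ^ (n - 1)))) :
    Nat.card (H.comap (heisQ p n)) = p ^ 3 * Nat.card H := by
  have hcard : Nat.card (Heis (p ^ n)) = p ^ 3 * Nat.card (Heis (p ^ (n - 1))) := by
    obtain ⟨m, rfl⟩ := Nat.exists_eq_add_of_le' hn
    rw [Heis.natCard, Heis.natCard, Nat.add_sub_cancel]
    ring
  have hindex : H.index ≠ 0 := by
    intro h
    have := H.card_mul_index
    rw [h, mul_zero, Heis.natCard] at this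
    exact pow_ne_zero _ (pow_ne_zero _ hp.ne_zero) this.symm
  have hcomap := (H.comap (heisQ p n)).card_mul_index
  rw [H.index_comap_of_surjective (heisQ_surjective p n), hcard, ← H.card_mul_index,
    ← mul_assoc] at hcomap
  exact Nat.eq_of_mul_eq_mul_right (Nat.pos_of_ne_zero hindex) hcomap

/-- for the short exact sequence `1 → (ℤ/pℤ)³ → 𝓗(pⁿ) → 𝓗(pⁿ⁻¹) → 1` and every
subgroup `H ≤ 𝓗(pⁿ⁻¹)`: `m_s(q⁻¹(H)) = p⁶ * m(H)`. -/
theorem statement17 (p n : ℕ) (hp : p.Prime) (hn : 2 ≤ n)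
    (H : Subgroup (Heis (p ^ (n - 1)))) :
    Nat.card (H.comap (heisQ p n)) *
        Nat.card (pseudocentralizer (heisQ p n)
          ((H.comap (heisQ p n) : Subgroup (Heis (p ^ n))) : Set (Heis (p ^ n)))) =
      p ^ 6 * (Nat.card H *
        Nat.card (Subgroup.centralizer (H : Set (Heis (p ^ (n - 1)))))) := by
  rw [pseudocentralizer_comap (heisQ_surjective p n),
    card_comap_heisQ hp (by lia), card_comap_heisQ hp (by lia)]
  ring
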